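/- Let (X, 𝒳) be a stable measurable space, let μ₁ and μ₂ be finite stable measures on (X, 𝒳), and set μ₃ := μ₂ − μ₁ (an L⁰-valued stable set function on 𝒳). Then there exists X₀|A₀ ∈ 𝒳 such that (i) μ₃(X) ≤ μ₃(X₀|A₀) a.s., and (ii) 0 ≤ μ₃(V|A) a.s. for all V|A ∈ 𝒳 with V|A ⊑ X₀|A₀. -/

import Mathlib

/-!
Common framework for conditional set theory and conditional measure theory
in the sense of Drapeau–Jamneshan–Karliczek–Kupper, specialized to the
measure algebra associated to a probability space `(Ω, F, P)`.

Functions on `Ω` are identified when they agree `P`-a.s., and measurable sets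
are identified when their symmetric difference is a null set.  Conditional
subsets of a stable set `X` are represented by raw pairs `(V, A)` consisting of
a set of functions and a (measurable) base set; all notions are formulated with
respect to the almost-sure identifications via the relations `cle` and `ceq`.
-/

open MeasureTheory Filter Set Topology
open scoped ENNReal

noncomputable section

namespace CondMT

variable {Ω E F' : Type*}

/-- A countable partition of `Ω` into measurable sets (modulo `P`-null sets). -/
structure Partition {Ω : Type*} (mΩ : MeasurableSpace Ω) (P : @Measure Ω mΩ) where
  part : ℕ → Set Ω
  meas : ∀ k, MeasurableSet[mΩ] (part k)
  disj : ∀ i j, i ≠ j → P (part i ∩ part j) = 0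
  cover : P ((⋃ k, part k)ᶜ) = 0

variable {mΩ : MeasurableSpace Ω}

open Classical in
/-- The concatenation `∑ x_k|A_k` of a sequence of functions along a partition:
the (a.s. unique) function equal to `x_k` on `A_k` for every `k`. -/
def Partition.concat {P : @Measure Ω mΩ} (A : Partition mΩ P) (x : ℕ → Ω → E) : Ω → E :=
  fun ω => if h : ∃ k, ω ∈ A.part k then x (Nat.find h) ω else x 0 ω

/-- A stable set of functions on `Ω`: nonempty, closed under a.s. modification and
closed under countable concatenations along partitions. -/
def Stable (P : @Measure Ω mΩ) (X : Set (Ω → E)) : Prop :=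
  X.Nonempty ∧ (∀ x ∈ X, ∀ y, x =ᵐ[P] y → y ∈ X) ∧
    ∀ (A : Partition mΩ P) (x : ℕ → Ω → E), (∀ k, x k ∈ X) → A.concat x ∈ X

/-- Raw data of a conditional subset `V|A`: the carrier `V` and the base set `A`. -/
abbrev CondRaw (Ω E : Type*) := Set (Ω → E) × Set Ω

/-- `S` represents a conditional subset of the stable set `X`: the carrier is a
stable subset of `X` and the base is measurable. -/
def IsCond (P : @Measure Ω mΩ) (X : Set (Ω → E)) (S : CondRaw Ω E) : Prop :=
  Stable P S.1 ∧ S.1 ⊆ X ∧ MeasurableSet[mΩ] S.2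

/-- Conditional inclusion `V|A ⊑ W|B`: `A ⊆ B` a.s., and every `x|A`, `x ∈ V`,
coincides a.s. on `A` with some `y|A`, `y ∈ W`. -/
def cle (P : @Measure Ω mΩ) (S T : CondRaw Ω E) : Prop :=
  P (S.2 \ T.2) = 0 ∧ ∀ x ∈ S.1, ∃ y ∈ T.1, ∀ᵐ ω ∂P, ω ∈ S.2 → x ω = y ω

/-- Identification of conditional subsets (equality in the conditional power set). -/
def ceq (P : @Measure Ω mΩ) (S T : CondRaw Ω E) : Prop := cle P S T ∧ cle P T S

/-- `x|C ∈ V|C`: the restriction of `x` to `C` agrees a.s. on `C` with an element of `V`. -/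
def memOn (P : @Measure Ω mΩ) (C : Set Ω) (x : Ω → E) (V : Set (Ω → E)) : Prop :=
  ∃ y ∈ V, ∀ᵐ ω ∂P, ω ∈ C → x ω = y ω

/-- `∑ V_k|A_k`, the set of concatenations of sequences taken from the `V_k`. -/
def concatSet (P : @Measure Ω mΩ) (A : Partition mΩ P) (V : ℕ → Set (Ω → E)) :
    Set (Ω → E) :=
  {f | ∃ x : ℕ → Ω → E, (∀ k, x k ∈ V k) ∧ f =ᵐ[P] A.concat x}

/-- Countable concatenation `∑ (V_k|B_k)|A_k := (∑ V_k|A_k)|⋃ (A_k ∩ B_k)` in the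
conditional power set. -/
def condConcat (P : @Measure Ω mΩ) (A : Partition mΩ P) (S : ℕ → CondRaw Ω E) :
    CondRaw Ω E :=
  (concatSet P A fun k => (S k).1, ⋃ k, A.part k ∩ (S k).2)

/-- Restriction `(V|A)|B := V|(A ∩ B)`. -/
def crestrict (S : CondRaw Ω E) (B : Set Ω) : CondRaw Ω E := (S.1, S.2 ∩ B)

/-- The degenerate conditional subset `X|∅ = {∗}`, the least element of `P(X)`. -/
def cbot (X : Set (Ω → E)) : CondRaw Ω E := (X, (∅ : Set Ω))

/-- The greatest element `X = X|Ω` of `P(X)`. -/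
def ctop (X : Set (Ω → E)) : CondRaw Ω E := (X, (univ : Set Ω))

/-- `a` is a supremum (conditional union) of the family `s` in `(P(X), ⊑)`. -/
def IsSupOf (P : @Measure Ω mΩ) (X : Set (Ω → E)) (s : Set (CondRaw Ω E))
    (a : CondRaw Ω E) : Prop :=
  IsCond P X a ∧ (∀ b ∈ s, cle P b a) ∧
    ∀ c, IsCond P X c → (∀ b ∈ s, cle P b c) → cle P a c

/-- `a` is an infimum (conditional intersection) of the family `s` in `(P(X), ⊑)`. -/
def IsInfOf (P : @Measure Ω mΩ) (X : Set (Ω → E)) (s : Set (CondRaw Ω E))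
    (a : CondRaw Ω E) : Prop :=
  IsCond P X a ∧ (∀ b ∈ s, cle P a b) ∧
    ∀ c, IsCond P X c → (∀ b ∈ s, cle P c b) → cle P c a

open Classical in
/-- The conditional union (supremum) of a family of conditional subsets. -/
def cSup (P : @Measure Ω mΩ) (X : Set (Ω → E)) (s : Set (CondRaw Ω E)) : CondRaw Ω E :=
  if h : ∃ a, IsSupOf P X s a then h.choose else ctop X

open Classical in
/-- The conditional intersection (infimum) of a family of conditional subsets. -/
def cInf (P : @Measure Ω mΩ) (X : Set (Ω → E)) (s : Set (CondRaw Ω E)) : CondRaw Ω E :=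
  if h : ∃ a, IsInfOf P X s a then h.choose else ctop X

/-- Binary conditional union. -/
def cSup₂ (P : @Measure Ω mΩ) (X : Set (Ω → E)) (a b : CondRaw Ω E) : CondRaw Ω E :=
  cSup P X {a, b}

/-- Binary conditional intersection. -/
def cInf₂ (P : @Measure Ω mΩ) (X : Set (Ω → E)) (a b : CondRaw Ω E) : CondRaw Ω E :=
  cInf P X {a, b}

/-- Conditional union of an indexed family. -/
def cSupFam (P : @Measure Ω mΩ) (X : Set (Ω → E)) {ι : Sort*}
    (S : ι → CondRaw Ω E) : CondRaw Ω E :=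
  cSup P X (range S)

/-- Conditional intersection of an indexed family. -/
def cInfFam (P : @Measure Ω mΩ) (X : Set (Ω → E)) {ι : Sort*}
    (S : ι → CondRaw Ω E) : CondRaw Ω E :=
  cInf P X (range S)

/-- Disjointness of conditional subsets: `V|A ⊓ W|B = {∗}`. -/
def cdisjoint (P : @Measure Ω mΩ) (X : Set (Ω → E)) (a b : CondRaw Ω E) : Prop :=
  ceq P (cInf₂ P X a b) (cbot X)

/-- The conditional complement `(V|A)^⊏ := ⊔ {W|B : W|B ⊓ V|A = {∗}}`. -/
def ccompl (P : @Measure Ω mΩ) (X : Set (Ω → E)) (a : CondRaw Ω E) : CondRaw Ω E :=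
  cSup P X {b | IsCond P X b ∧ cdisjoint P X b a}

open Classical in
/-- The largest measurable set (mod null sets) satisfying a property `Φ`,
obtained by an exhaustion argument; junk value `∅` if there is none. -/
def largestSet (P : @Measure Ω mΩ) (Φ : Set Ω → Prop) : Set Ω :=
  if h : ∃ C, MeasurableSet[mΩ] C ∧ Φ C ∧
      ∀ C', MeasurableSet[mΩ] C' → Φ C' → P (C' \ C) = 0
  then h.choose else ∅

open Classical in
/-- The smallest measurable set (mod null sets) satisfying a property `Φ`. -/
def smallestSet (P : @Measure Ω mΩ) (Φ : Set Ω → Prop) : Set Ω :=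
  if h : ∃ C, MeasurableSet[mΩ] C ∧ Φ C ∧
      ∀ C', MeasurableSet[mΩ] C' → Φ C' → P (C \ C') = 0
  then h.choose else univ

/-- Essential infimum `inf_i A_i` of a family of measurable sets in the measure algebra. -/
def essInfFam (P : @Measure Ω mΩ) {ι : Sort*} (A : ι → Set Ω) : Set Ω :=
  largestSet P fun C => ∀ i, P (C \ A i) = 0

/-- Essential supremum `sup_i A_i` of a family of measurable sets in the measure algebra. -/
def essSupFam (P : @Measure Ω mΩ) {ι : Sort*} (A : ι → Set Ω) : Set Ω :=
  smallestSet P fun C => ∀ i, P (A i \ C) = 0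

/-- A stable collection: a nonempty, `ceq`-saturated family of conditional subsets of `X`
closed under countable concatenations. -/
def IsStableColl (P : @Measure Ω mΩ) (X : Set (Ω → E)) (𝒞 : Set (CondRaw Ω E)) : Prop :=
  𝒞.Nonempty ∧ (∀ S ∈ 𝒞, IsCond P X S) ∧
    (∀ S ∈ 𝒞, ∀ T, IsCond P X T → ceq P S T → T ∈ 𝒞) ∧
    ∀ (A : Partition mΩ P) (S : ℕ → CondRaw Ω E), (∀ k, S k ∈ 𝒞) → condConcat P A S ∈ 𝒞

/-- A stable σ-algebra on `X`. -/
def IsStableSigma (P : @Measure Ω mΩ) (X : Set (Ω → E)) (𝒳 : Set (CondRaw Ω E)) : Prop :=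
  IsStableColl P X 𝒳 ∧ ctop X ∈ 𝒳 ∧ (∀ S ∈ 𝒳, ccompl P X S ∈ 𝒳) ∧
    ∀ S : ℕ → CondRaw Ω E, (∀ k, S k ∈ 𝒳) → cSupFam P X S ∈ 𝒳

/-- A stable Dynkin system on `X`. -/
def IsStableDynkin (P : @Measure Ω mΩ) (X : Set (Ω → E)) (𝒟 : Set (CondRaw Ω E)) : Prop :=
  IsStableColl P X 𝒟 ∧ ctop X ∈ 𝒟 ∧ (∀ S ∈ 𝒟, ccompl P X S ∈ 𝒟) ∧
    ∀ S : ℕ → CondRaw Ω E, (∀ k, S k ∈ 𝒟) →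
      (∀ i j, i ≠ j → cdisjoint P X (S i) (S j)) → cSupFam P X S ∈ 𝒟

/-- A stable ring on `X`. -/
def IsStableRing (P : @Measure Ω mΩ) (X : Set (Ω → E)) (𝒳 : Set (CondRaw Ω E)) : Prop :=
  IsStableColl P X 𝒳 ∧
    ∀ S ∈ 𝒳, ∀ T ∈ 𝒳, cInf₂ P X S (ccompl P X T) ∈ 𝒳 ∧ cSup₂ P X S T ∈ 𝒳

/-- The stable σ-algebra generated by a collection `ℰ`. -/
def sigmaGen (P : @Measure Ω mΩ) (X : Set (Ω → E)) (ℰ : Set (CondRaw Ω E)) :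
    Set (CondRaw Ω E) :=
  ⋂₀ {𝒳 | IsStableSigma P X 𝒳 ∧ ℰ ⊆ 𝒳}

/-- The stable Dynkin system generated by a collection `ℰ`. -/
def dynkinGen (P : @Measure Ω mΩ) (X : Set (Ω → E)) (ℰ : Set (CondRaw Ω E)) :
    Set (CondRaw Ω E) :=
  ⋂₀ {𝒟 | IsStableDynkin P X 𝒟 ∧ ℰ ⊆ 𝒟}

/-! ### Stable set functions and stable measures -/

/-- A stable set function `μ : 𝒞 → L̄⁰₊` (represented by measurable representatives,
well defined modulo identification, and commuting with countable concatenations). -/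
def IsStableSetFun (P : @Measure Ω mΩ) (𝒞 : Set (CondRaw Ω E))
    (μ : CondRaw Ω E → Ω → ℝ≥0∞) : Prop :=
  (∀ S ∈ 𝒞, Measurable[mΩ] (μ S)) ∧
    (∀ S ∈ 𝒞, ∀ T ∈ 𝒞, ceq P S T → μ S =ᵐ[P] μ T) ∧
    ∀ (A : Partition mΩ P) (S : ℕ → CondRaw Ω E), (∀ k, S k ∈ 𝒞) →
      μ (condConcat P A S) =ᵐ[P] A.concat fun k => μ (S k)

/-- Property (M1): `μ(V|A) = μ(V|A)|A + 0|Aᶜ`. -/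
def M1 (P : @Measure Ω mΩ) (𝒞 : Set (CondRaw Ω E)) (μ : CondRaw Ω E → Ω → ℝ≥0∞) : Prop :=
  ∀ S ∈ 𝒞, μ S =ᵐ[P] S.2.indicator (μ S)

/-- Property (M2): countable additivity on pairwise disjoint sequences whose
conditional union belongs to the domain. -/
def M2 (P : @Measure Ω mΩ) (X : Set (Ω → E)) (𝒳 : Set (CondRaw Ω E))
    (μ : CondRaw Ω E → Ω → ℝ≥0∞) : Prop :=
  ∀ S : ℕ → CondRaw Ω E, (∀ k, S k ∈ 𝒳) →
    (∀ i j, i ≠ j → cdisjoint P X (S i) (S j)) → cSupFam P X S ∈ 𝒳 →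
    μ (cSupFam P X S) =ᵐ[P] fun ω => ∑' k, μ (S k) ω

/-- Finite additivity: (M2) for finite pairwise disjoint families. -/
def FinAdd (P : @Measure Ω mΩ) (X : Set (Ω → E)) (𝒳 : Set (CondRaw Ω E))
    (μ : CondRaw Ω E → Ω → ℝ≥0∞) : Prop :=
  ∀ (n : ℕ) (S : Fin n → CondRaw Ω E), (∀ k, S k ∈ 𝒳) →
    (∀ i j, i ≠ j → cdisjoint P X (S i) (S j)) → cSupFam P X S ∈ 𝒳 →
    μ (cSupFam P X S) =ᵐ[P] fun ω => ∑ k, μ (S k) ω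

/-- A stable measure (or stable pre-measure, when the domain is merely a stable
ring): a stable set function satisfying (M1) and (M2). -/
def IsStableMeasureOn (P : @Measure Ω mΩ) (X : Set (Ω → E)) (𝒳 : Set (CondRaw Ω E))
    (μ : CondRaw Ω E → Ω → ℝ≥0∞) : Prop :=
  IsStableSetFun P 𝒳 μ ∧ M1 P 𝒳 μ ∧ M2 P X 𝒳 μ

/-- A finite stable measure. -/
def IsFiniteStableMeasureOn (P : @Measure Ω mΩ) (X : Set (Ω → E))
    (𝒳 : Set (CondRaw Ω E)) (μ : CondRaw Ω E → Ω → ℝ≥0∞) : Prop :=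
  IsStableMeasureOn P X 𝒳 μ ∧ ∀ᵐ ω ∂P, μ (ctop X) ω < ∞

/-- A stable probability measure. -/
def IsStableProbOn (P : @Measure Ω mΩ) (X : Set (Ω → E)) (𝒳 : Set (CondRaw Ω E))
    (μ : CondRaw Ω E → Ω → ℝ≥0∞) : Prop :=
  IsStableMeasureOn P X 𝒳 μ ∧ μ (ctop X) =ᵐ[P] fun _ => (1 : ℝ≥0∞)

/-- A stable outer measure on the conditional power set of `X`. -/
def IsStableOuter (P : @Measure Ω mΩ) (X : Set (Ω → E))
    (μ : CondRaw Ω E → Ω → ℝ≥0∞) : Prop :=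
  (∀ S, IsCond P X S → Measurable[mΩ] (μ S)) ∧
    (∀ S T, IsCond P X S → IsCond P X T → ceq P S T → μ S =ᵐ[P] μ T) ∧
    (∀ (A : Partition mΩ P) (S : ℕ → CondRaw Ω E), (∀ k, IsCond P X (S k)) →
      μ (condConcat P A S) =ᵐ[P] A.concat fun k => μ (S k)) ∧
    (∀ S, IsCond P X S → ∀ B, MeasurableSet[mΩ] B →
      μ (crestrict S B) =ᵐ[P] B.indicator (μ S)) ∧
    (∀ S T, IsCond P X S → IsCond P X T → cle P S T → ∀ᵐ ω ∂P, μ S ω ≤ μ T ω) ∧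
    ∀ S : ℕ → CondRaw Ω E, (∀ k, IsCond P X (S k)) →
      ∀ᵐ ω ∂P, μ (cSupFam P X S) ω ≤ ∑' k, μ (S k) ω

/-- Stable Carathéodory measurability with respect to a stable outer measure. -/
def CaraMeasurable (P : @Measure Ω mΩ) (X : Set (Ω → E))
    (μ : CondRaw Ω E → Ω → ℝ≥0∞) (S : CondRaw Ω E) : Prop :=
  ∀ T, IsCond P X T →
    (fun ω => μ (cInf₂ P X T S) ω + μ (cInf₂ P X T (ccompl P X S)) ω) =ᵐ[P] μ T

/-! ### Stable functions, the stable Borel σ-algebra on `L⁰`, and the integral -/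

/-- The stable set `L⁰_m(E)` of all (classes of) measurable functions `Ω → E`. -/
def l0m (P : @Measure Ω mΩ) (E : Type*) [MeasurableSpace E] : Set (Ω → E) :=
  {x | AEMeasurable x P}

/-- A stable function between stable sets of functions. -/
def StableFun (P : @Measure Ω mΩ) (X : Set (Ω → E)) (Y : Set (Ω → F'))
    (f : (Ω → E) → Ω → F') : Prop :=
  (∀ x ∈ X, f x ∈ Y) ∧ (∀ x ∈ X, ∀ y ∈ X, x =ᵐ[P] y → f x =ᵐ[P] f y) ∧
    ∀ (A : Partition mΩ P) (x : ℕ → Ω → E), (∀ k, x k ∈ X) →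
      f (A.concat x) =ᵐ[P] A.concat fun k => f (x k)

/-- The conditional preimage `f⁻¹(W|A)`. -/
def cPreimage (P : @Measure Ω mΩ) (X : Set (Ω → E)) (f : (Ω → E) → Ω → F')
    (W : CondRaw Ω F') : CondRaw Ω E :=
  ({x ∈ X | memOn P (largestSet P fun C => P (C \ W.2) = 0 ∧ ∃ x ∈ X, memOn P C (f x) W.1)
      (f x) W.1},
    largestSet P fun C => P (C \ W.2) = 0 ∧ ∃ x ∈ X, memOn P C (f x) W.1)

/-- The stable Borel σ-algebra `B(L⁰)` on `L⁰`, generated by the stable open balls. -/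
def borelL0 (P : @Measure Ω mΩ) : Set (CondRaw Ω ℝ) :=
  sigmaGen P (l0m P ℝ)
    {S | ∃ r ε : Ω → ℝ, AEMeasurable r P ∧ AEMeasurable ε P ∧ (∀ᵐ ω ∂P, 0 < ε ω) ∧
      ceq P S ({s | AEMeasurable s P ∧ ∀ᵐ ω ∂P, |s ω - r ω| < ε ω}, univ)}

/-- A stably measurable function `f : X → L⁰` with respect to a stable σ-algebra `𝒳`. -/
def StablyMeasurable (P : @Measure Ω mΩ) (X : Set (Ω → E)) (𝒳 : Set (CondRaw Ω E))
    (f : (Ω → E) → Ω → ℝ) : Prop :=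
  StableFun P X (l0m P ℝ) f ∧ ∀ W ∈ borelL0 P, cPreimage P X f W ∈ 𝒳

/-- The base set `A_x` of the stable indicator function of `S = V|A` at `x`. -/
def indBase (P : @Measure Ω mΩ) (S : CondRaw Ω E) (x : Ω → E) : Set Ω :=
  largestSet P fun C => P (C \ S.2) = 0 ∧ memOn P C x S.1

/-- The stable indicator function `1_{V|A} : X → L⁰`. -/
def cIndicator (P : @Measure Ω mΩ) (S : CondRaw Ω E) (x : Ω → E) : Ω → ℝ :=
  (indBase P S x).indicator fun _ => (1 : ℝ)

/-- Data of a stable elementary function: coefficients and conditional sets. -/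
def ElemRep (Ω E : Type*) := Σ n : ℕ, (Fin n → Ω → ℝ) × (Fin n → CondRaw Ω E)

/-- The function `∑_{k ≤ n} r_k 1_{V_k|A_k}` represented by `ρ`. -/
def repFun (P : @Measure Ω mΩ) (ρ : ElemRep Ω E) : (Ω → E) → Ω → ℝ :=
  fun x ω => ∑ k, ρ.2.1 k ω * cIndicator P (ρ.2.2 k) x ω

/-- The representation `ρ` is admissible: nonnegative `L⁰`-coefficients and a finite
pairwise disjoint family in `𝒳` whose conditional union is `X`. -/
def GoodRep (P : @Measure Ω mΩ) (X : Set (Ω → E)) (𝒳 : Set (CondRaw Ω E))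
    (ρ : ElemRep Ω E) : Prop :=
  (∀ k, AEMeasurable (ρ.2.1 k) P) ∧ (∀ k, ∀ᵐ ω ∂P, 0 ≤ ρ.2.1 k ω) ∧
    (∀ k, ρ.2.2 k ∈ 𝒳) ∧ (∀ i j, i ≠ j → cdisjoint P X (ρ.2.2 i) (ρ.2.2 j)) ∧
    ceq P (cSupFam P X ρ.2.2) (ctop X)

/-- A stable elementary function. -/
def IsElementary (P : @Measure Ω mΩ) (X : Set (Ω → E)) (𝒳 : Set (CondRaw Ω E))
    (f : (Ω → E) → Ω → ℝ) : Prop :=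
  ∃ ρ : ElemRep Ω E, GoodRep P X 𝒳 ρ ∧ ∀ x ∈ X, f x =ᵐ[P] repFun P ρ x

/-- The stable Lebesgue integral `∑_k r_k μ(V_k|A_k)` of the elementary representation. -/
def repInt (μ : CondRaw Ω E → Ω → ℝ≥0∞) (ρ : ElemRep Ω E) : Ω → ℝ≥0∞ :=
  fun ω => ∑ k, ENNReal.ofReal (ρ.2.1 k ω) * μ (ρ.2.2 k) ω

/-- The stable Lebesgue integral of a nonnegative function, as the supremum of the
integrals of the dominated stable elementary functions. -/
def cIntNN (P : @Measure Ω mΩ) (X : Set (Ω → E)) (𝒳 : Set (CondRaw Ω E))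
    (μ : CondRaw Ω E → Ω → ℝ≥0∞) (f : (Ω → E) → Ω → ℝ) : Ω → ℝ≥0∞ :=
  fun ω =>
    ⨆ ρ : {ρ : ElemRep Ω E // GoodRep P X 𝒳 ρ ∧
        ∀ x ∈ X, ∀ᵐ ω' ∂P, repFun P ρ x ω' ≤ f x ω'},
      repInt μ ρ.1 ω

/-- The positive part `f⁺` of an `L⁰`-valued function. -/
def fplus (f : (Ω → E) → Ω → ℝ) : (Ω → E) → Ω → ℝ := fun x ω => max (f x ω) 0

/-- The negative part `f⁻` of an `L⁰`-valued function. -/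
def fminus (f : (Ω → E) → Ω → ℝ) : (Ω → E) → Ω → ℝ := fun x ω => max (-(f x ω)) 0

/-- Stable integrability of `f : X → L⁰`. -/
def CIntegrable (P : @Measure Ω mΩ) (X : Set (Ω → E)) (𝒳 : Set (CondRaw Ω E))
    (μ : CondRaw Ω E → Ω → ℝ≥0∞) (f : (Ω → E) → Ω → ℝ) : Prop :=
  StablyMeasurable P X 𝒳 f ∧ (∀ᵐ ω ∂P, cIntNN P X 𝒳 μ (fplus f) ω < ∞) ∧
    ∀ᵐ ω ∂P, cIntNN P X 𝒳 μ (fminus f) ω < ∞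

/-- The stable Lebesgue integral `∫_X f dμ := ∫ f⁺ dμ − ∫ f⁻ dμ`. -/
def cInt (P : @Measure Ω mΩ) (X : Set (Ω → E)) (𝒳 : Set (CondRaw Ω E))
    (μ : CondRaw Ω E → Ω → ℝ≥0∞) (f : (Ω → E) → Ω → ℝ) : Ω → ℝ :=
  fun ω => (cIntNN P X 𝒳 μ (fplus f) ω).toReal - (cIntNN P X 𝒳 μ (fminus f) ω).toReal

/-! ### Products and sections -/

/-- The pairing `ω ↦ (x ω, y ω)`. -/
def pairFn (x : Ω → E) (y : Ω → F') : Ω → E × F' := fun ω => (x ω, y ω)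

/-- The Cartesian product `X × Y` of two stable sets, as a stable set of functions
`Ω → E × F'`. -/
def prodSet (P : @Measure Ω mΩ) (X : Set (Ω → E)) (Y : Set (Ω → F')) :
    Set (Ω → E × F') :=
  {z | ∃ x ∈ X, ∃ y ∈ Y, z =ᵐ[P] pairFn x y}

/-- The conditional rectangle `V|A × W|B := (V × W)|A ∩ B`. -/
def crect (P : @Measure Ω mΩ) (S : CondRaw Ω E) (T : CondRaw Ω F') :
    CondRaw Ω (E × F') :=
  (prodSet P S.1 T.1, S.2 ∩ T.2)

/-- The stable product σ-algebra `𝒳 ⊗ 𝒴`, generated by the conditional rectangles. -/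
def prodSigma (P : @Measure Ω mΩ) (X : Set (Ω → E)) (Y : Set (Ω → F'))
    (𝒳 : Set (CondRaw Ω E)) (𝒴 : Set (CondRaw Ω F')) : Set (CondRaw Ω (E × F')) :=
  sigmaGen P (prodSet P X Y) {R | ∃ S ∈ 𝒳, ∃ T ∈ 𝒴, ceq P R (crect P S T)}

/-- The conditional `x`-section `(Z|C)_x` of a conditional subset of `X × Y`. -/
def xsection (P : @Measure Ω mΩ) (Y : Set (Ω → F')) (Z : CondRaw Ω (E × F'))
    (x : Ω → E) : CondRaw Ω F' :=
  ({y ∈ Y | memOn P (largestSet P fun D => P (D \ Z.2) = 0 ∧ ∃ y ∈ Y, memOn P D (pairFn x y) Z.1)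
      (pairFn x y) Z.1},
    largestSet P fun D => P (D \ Z.2) = 0 ∧ ∃ y ∈ Y, memOn P D (pairFn x y) Z.1)

/-- The conditional `y`-section `(Z|C)_y` of a conditional subset of `X × Y`. -/
def ysection (P : @Measure Ω mΩ) (X : Set (Ω → E)) (Z : CondRaw Ω (E × F'))
    (y : Ω → F') : CondRaw Ω E :=
  ({x ∈ X | memOn P (largestSet P fun D => P (D \ Z.2) = 0 ∧ ∃ x ∈ X, memOn P D (pairFn x y) Z.1)
      (pairFn x y) Z.1},
    largestSet P fun D => P (D \ Z.2) = 0 ∧ ∃ x ∈ X, memOn P D (pairFn x y) Z.1)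

/-! ### Conditional subsets of `L⁰_m(E)` associated to measurable sets -/

/-- `L⁰_m(F) = {x ∈ L⁰_m(E) : x ∈ F a.s.}` for a measurable `F ⊆ E`. -/
def l0mF (P : @Measure Ω mΩ) {E : Type*} [MeasurableSpace E] (F : Set E) : Set (Ω → E) :=
  {x | AEMeasurable x P ∧ ∀ᵐ ω ∂P, x ω ∈ F}

/-- `∑ L⁰_m(F_k)|A_k = {x ∈ L⁰_m(E) : x ∈ F_k a.s. on A_k for all k}`. -/
def l0mConcat (P : @Measure Ω mΩ) {E : Type*} [MeasurableSpace E]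
    (A : Partition mΩ P) (F : ℕ → Set E) : Set (Ω → E) :=
  {x | AEMeasurable x P ∧ ∀ k, ∀ᵐ ω ∂P, ω ∈ A.part k → x ω ∈ F k}

/-- The stable ring `ℛ` on `L⁰_m(E)` generated by a measurable structure on `E`:
all conditional subsets of the form `(∑ L⁰_m(F_k)|A_k)|B`. -/
def ringR (P : @Measure Ω mΩ) (E : Type*) [MeasurableSpace E] : Set (CondRaw Ω E) :=
  {S | ∃ (F : ℕ → Set E) (A : Partition mΩ P) (B : Set Ω),
    (∀ k, MeasurableSet (F k)) ∧ MeasurableSet[mΩ] B ∧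
      ceq P S (l0mConcat P A F, B)}

end CondMT

namespace CondMT

/-!
Up to null sets, a conditional subset `V|A` of `X` is the same thing as the local function sending
`x ∈ X` to the largest set on which `x` belongs to `V|A`; conditional unions, intersections and
complements become pointwise set operations. The graphs of these functions therefore turn a stable
σ-algebra on `X` into a classical σ-algebra on the pairs `(x, ω)`, and integrating the values of a
stable measure against a measure equivalent to `P` gives a classical measure on it. The equivalent
measure can be chosen so that `μ₁` and `μ₂` become finite, and then the classical Hahn
decomposition applies. Since every cylinder over a measurable `B ⊆ Ω` is a graph, the resulting
inequalities between integrals hold over all such `B`, hence almost surely for the integrands.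
-/

section Exhaustion

variable {Ω : Type*} {mΩ : MeasurableSpace Ω} {P : Measure Ω} {Φ : Set Ω → Prop}

theorem measurableSet_largestSet (Φ : Set Ω → Prop) : MeasurableSet (largestSet P Φ) := by
  unfold largestSet
  split_ifs with h
  exacts [h.choose_spec.1, .empty]

theorem exists_largest_measurableSet [SFinite P] (h_empty : Φ ∅)
    (h_iUnion : ∀ C : ℕ → Set Ω, (∀ k, MeasurableSet (C k)) → (∀ k, Φ (C k)) → Φ (⋃ k, C k)) :
    ∃ C, MeasurableSet C ∧ Φ C ∧ ∀ C', MeasurableSet C' → Φ C' → P (C' \ C) = 0 := by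
  let 𝒜 : Set (Set Ω) := {C | MeasurableSet C ∧ Φ C}
  have h𝒜 : 𝒜.Nonempty := ⟨∅, .empty, h_empty⟩
  obtain ⟨u, -, hu_lim, hu_mem⟩ :=
    exists_seq_tendsto_sSup (h𝒜.image P.toFinite) (OrderTop.bddAbove _)
  choose C hC hCu using hu_mem
  have hU : MeasurableSet (⋃ k, C k) := .iUnion fun k => (hC k).1
  refine ⟨⋃ k, C k, hU, h_iUnion C (fun k => (hC k).1) fun k => (hC k).2, fun C' hC' hΦ => ?_⟩
  have hΦU : Φ (C' ∪ ⋃ k, C k) := by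
    have := h_iUnion (fun n => Nat.casesOn n C' C)
      (by rintro (_ | k); exacts [hC', (hC k).1]) (by rintro (_ | k); exacts [hΦ, (hC k).2])
    rwa [← union_iUnion_nat_succ] at this
  have hmax : P.toFinite (C' ∪ ⋃ k, C k) ≤ P.toFinite (⋃ k, C k) :=
    (le_sSup (mem_image_of_mem P.toFinite (show _ ∈ 𝒜 from ⟨hC'.union hU, hΦU⟩))).trans
      (le_of_tendsto' hu_lim fun n => (hCu n).symm.le.trans (measure_mono (subset_iUnion C n)))
  have h_eq : (⋃ k, C k) =ᵐ[P] (C' ∪ ⋃ k, C k : Set Ω) := by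
    simpa only [EventuallyEq, ae_toFinite] using ae_eq_of_subset_of_measure_ge
      subset_union_right hmax hU.nullMeasurableSet (measure_ne_top P.toFinite _)
  exact ae_le_set.1 (subset_union_left.eventuallyLE.trans h_eq.symm.le)

theorem largestSet_spec [SFinite P] (h_empty : Φ ∅)
    (h_iUnion : ∀ C : ℕ → Set Ω, (∀ k, MeasurableSet (C k)) → (∀ k, Φ (C k)) → Φ (⋃ k, C k)) :
    Φ (largestSet P Φ) ∧ ∀ C, MeasurableSet C → Φ C → C ≤ᵐ[P] largestSet P Φ := by
  have h := exists_largest_measurableSet (P := P) h_empty h_iUnion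
  rw [largestSet, dif_pos h]
  exact ⟨h.choose_spec.2.1, fun C hC hΦ => ae_le_set.2 (h.choose_spec.2.2 C hC hΦ)⟩

end Exhaustion

section Gluing

variable {Ω E : Type*} {mΩ : MeasurableSpace Ω} {P : Measure Ω} {V : Set (Ω → E)}
  {x y z : Ω → E} {B D : Set Ω} {C : ℕ → Set Ω}

theorem Partition.ae_exists_mem_part (A : Partition mΩ P) : ∀ᵐ ω ∂P, ∃ k, ω ∈ A.part k := by
  filter_upwards [measure_eq_zero_iff_ae_notMem.1 A.cover] with ω hω
  simpa using hω

theorem Partition.concat_ae_eq (A : Partition mΩ P) (x : ℕ → Ω → E) :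
    ∀ᵐ ω ∂P, ∀ k, ω ∈ A.part k → A.concat x ω = x k ω := by
  have h_disj : ∀ᵐ ω ∂P, ∀ i j, i ≠ j → ω ∉ A.part i ∩ A.part j := by
    simp only [ae_all_iff]
    exact fun i j hij => measure_eq_zero_iff_ae_notMem.1 (A.disj i j hij)
  filter_upwards [h_disj] with ω hω k hk
  have h : ∃ k, ω ∈ A.part k := ⟨k, hk⟩
  classical
  obtain rfl : Nat.find h = k := not_not.1 fun hne => hω _ _ hne ⟨Nat.find_spec h, hk⟩
  rw [Partition.concat, dif_pos h]

/-- The partition obtained by disjointing a countable measurable cover. -/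
def disjointedPartition (P : Measure Ω) (C : ℕ → Set Ω) (hC : ∀ k, MeasurableSet (C k))
    (h_cover : ⋃ k, C k = univ) : Partition mΩ P where
  part := disjointed C
  meas := MeasurableSet.disjointed hC
  disj i j hij := by rw [(disjoint_disjointed C hij).inter_eq, measure_empty]
  cover := by rw [iUnion_disjointed, h_cover, compl_univ, measure_empty]

theorem Stable.exists_glue (hV : Stable P V) (hC : ∀ k, MeasurableSet (C k)) {y : ℕ → Ω → E}
    (hy : ∀ k, y k ∈ V) : ∃ z ∈ V, ∀ k, ∀ᵐ ω ∂P, ω ∈ disjointed C k → z ω = y k ω := by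
  let D : ℕ → Set Ω := fun k => C k ∪ (⋃ j, C j)ᶜ
  have h_cover : ⋃ k, D k = univ := by
    rw [← iUnion_union, union_compl_self]
  have h_sub (k : ℕ) : disjointed C k ⊆ disjointed D k := by
    intro ω
    simp only [disjointed_eq_inter_compl, D, mem_inter_iff, mem_iInter, mem_compl_iff, mem_union,
      mem_iUnion, not_or, not_not]
    exact fun ⟨hω, hω'⟩ => ⟨.inl hω, fun i hi => ⟨hω' i hi, k, hω⟩⟩
  let A := disjointedPartition P D (fun k => (hC k).union (MeasurableSet.iUnion hC).compl) h_cover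
  refine ⟨A.concat y, hV.2.2 A y hy, fun k => ?_⟩
  filter_upwards [A.concat_ae_eq y] with ω h hω using h k (h_sub k hω)

theorem memOn.mono (h : memOn P D x V) (hBD : B ≤ᵐ[P] D) : memOn P B x V := by
  obtain ⟨y, hy, hxy⟩ := h
  exact ⟨y, hy, by filter_upwards [hxy, hBD] with ω h h' hω using h (h' hω)⟩

theorem memOn.congr (h : memOn P B x V) (hxy : ∀ᵐ ω ∂P, ω ∈ B → x ω = y ω) :
    memOn P B y V := by
  obtain ⟨z, hz, hxz⟩ := h
  exact ⟨z, hz, by filter_upwards [hxz, hxy] with ω h h' hω using (h' hω).symm.trans (h hω)⟩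

theorem memOn_empty (hV : V.Nonempty) : memOn P ∅ x V :=
  ⟨hV.some, hV.some_mem, ae_of_all _ fun _ h => h.elim⟩

theorem Stable.memOn_iUnion (hV : Stable P V) (hC : ∀ k, MeasurableSet (C k))
    (h : ∀ k, memOn P (C k) x V) : memOn P (⋃ k, C k) x V := by
  choose y hy hxy using h
  obtain ⟨z, hz, hzy⟩ := hV.exists_glue hC hy
  refine ⟨z, hz, ?_⟩
  filter_upwards [ae_all_iff.2 hzy, ae_all_iff.2 hxy] with ω hzy hxy hω
  rw [← iUnion_disjointed] at hω
  obtain ⟨k, hk⟩ := mem_iUnion.1 hω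
  rw [hzy k hk, hxy k (disjointed_subset C k hk)]

theorem Stable.mem_of_forall_memOn (hV : Stable P V) (hC : ∀ k, MeasurableSet (C k))
    (h_cover : ⋃ k, C k = univ) (hx : ∀ k, memOn P (C k) x V) : x ∈ V := by
  obtain ⟨y, hy, hxy⟩ := hV.memOn_iUnion hC hx
  refine hV.2.1 y hy x ?_
  filter_upwards [hxy] with ω hω using (hω (h_cover ▸ mem_univ ω)).symm

theorem iUnion_ite_compl_eq_univ {α : Type*} (B : Set α) :
    ⋃ n : ℕ, (if n = 0 then B else Bᶜ) = univ := by
  refine eq_univ_of_forall fun a => mem_iUnion.2 ?_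
  exact (em (a ∈ B)).elim (fun h => ⟨0, by rwa [if_pos rfl]⟩)
    fun h => ⟨1, by rwa [if_neg one_ne_zero]⟩

theorem Stable.piecewise_mem (hV : Stable P V) (hB : MeasurableSet B) (hx : x ∈ V) (hy : y ∈ V)
    [∀ ω, Decidable (ω ∈ B)] : B.piecewise x y ∈ V := by
  refine hV.mem_of_forall_memOn (C := fun n => if n = 0 then B else Bᶜ)
    (fun n => by split_ifs; exacts [hB, hB.compl])
    (iUnion_ite_compl_eq_univ B) fun n => ?_
  split_ifs
  exacts [⟨x, hx, ae_of_all _ fun ω => piecewise_eq_of_mem B x y⟩,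
    ⟨y, hy, ae_of_all _ fun ω => piecewise_eq_of_notMem B x y⟩]

end Gluing

section IndBase

variable {Ω E : Type*} {mΩ : MeasurableSpace Ω} {P : Measure Ω} {X : Set (Ω → E)}
  {x y : Ω → E} {C : Set Ω} {S T : CondRaw Ω E}

theorem measurableSet_indBase (S : CondRaw Ω E) (x : Ω → E) : MeasurableSet (indBase P S x) :=
  measurableSet_largestSet _

variable [SFinite P]

theorem indBase_spec (hS : Stable P S.1) :
    (indBase P S x ≤ᵐ[P] S.2 ∧ memOn P (indBase P S x) x S.1) ∧
      ∀ C, MeasurableSet C → C ≤ᵐ[P] S.2 ∧ memOn P C x S.1 → C ≤ᵐ[P] indBase P S x := by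
  have h := largestSet_spec (P := P) (Φ := fun C => P (C \ S.2) = 0 ∧ memOn P C x S.1)
    ⟨by simp, memOn_empty hS.1⟩ fun C hC h => ⟨?_, hS.memOn_iUnion hC fun k => (h k).2⟩
  · exact ⟨h.1.imp_left ae_le_set.2, fun C hC hC' => h.2 C hC (hC'.imp_left ae_le_set.1)⟩
  · simpa only [iUnion_sdiff, measure_iUnion_null_iff] using fun k => (h k).1

theorem le_indBase_iff (hS : Stable P S.1) (hC : MeasurableSet C) :
    C ≤ᵐ[P] indBase P S x ↔ C ≤ᵐ[P] S.2 ∧ memOn P C x S.1 :=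
  ⟨fun h => ⟨h.trans (indBase_spec hS).1.1, (indBase_spec hS).1.2.mono h⟩,
    (indBase_spec hS).2 C hC⟩

theorem cle_iff (hS : IsCond P X S) (hT : IsCond P X T) :
    cle P S T ↔ ∀ x ∈ X, indBase P S x ≤ᵐ[P] indBase P T x := by
  refine ⟨fun ⟨h_base, h_mem⟩ x _ => ?_, fun h => ?_⟩
  · obtain ⟨hI, y, hy, hxy⟩ := (le_indBase_iff hS.1 (measurableSet_indBase S x)).1 .rfl
    obtain ⟨z, hz, hyz⟩ := h_mem y hy
    refine (le_indBase_iff hT.1 (measurableSet_indBase S x)).2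
      ⟨hI.trans (ae_le_set.2 h_base), z, hz, ?_⟩
    filter_upwards [hI, hxy, hyz] with ω hI hxy hyz hω using (hxy hω).trans (hyz (hI hω))
  · have key (x) (hx : x ∈ S.1) : S.2 ≤ᵐ[P] T.2 ∧ memOn P S.2 x T.1 :=
      (le_indBase_iff hT.1 hS.2.2).1 <| .trans
        ((le_indBase_iff hS.1 hS.2.2).2 ⟨.rfl, x, hx, ae_of_all _ fun _ _ => rfl⟩)
        (h x (hS.2.1 hx))
    obtain ⟨x, hx⟩ := hS.1.1
    exact ⟨ae_le_set.1 (key x hx).1, fun x hx => (key x hx).2⟩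

theorem ceq_iff (hS : IsCond P X S) (hT : IsCond P X T) :
    ceq P S T ↔ ∀ x ∈ X, indBase P S x =ᵐ[P] indBase P T x := by
  simp only [ceq, cle_iff hS hT, cle_iff hT hS, ← forall₂_and]
  exact forall₂_congr fun x _ => (eventuallyLE_antisymm_iff).symm

theorem indBase_mk_ae_eq (hX : Stable P X) (hC : MeasurableSet C) (hx : x ∈ X) :
    indBase P (X, C) x =ᵐ[P] C :=
  (indBase_spec (S := (X, C)) hX).1.1.antisymm <|
    (le_indBase_iff (S := (X, C)) hX hC).2 ⟨.rfl, x, hx, ae_of_all _ fun _ _ => rfl⟩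

end IndBase

section LocalFunctions

variable {Ω E : Type*} {mΩ : MeasurableSpace Ω} {P : Measure Ω} {X : Set (Ω → E)}
  {x y z : Ω → E} {C D : Set Ω} {S : CondRaw Ω E} {I J : (Ω → E) → Set Ω}

/-- A measurable-set-valued function `I` on `X` is local if `I x` and `I y` agree wherever `x` and
`y` do. Up to null sets, conditional subsets of `X` are the same thing as local functions: `V|A`
corresponds to `x ↦ indBase P (V, A) x`, and conversely see `ofLocal`. -/
structure IsLocal (P : Measure Ω) (X : Set (Ω → E)) (I : (Ω → E) → Set Ω) : Prop where
  measurableSet : ∀ x ∈ X, MeasurableSet (I x)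
  le_of_eqOn : ∀ x ∈ X, ∀ y ∈ X, ∀ C, MeasurableSet C → (∀ᵐ ω ∂P, ω ∈ C → x ω = y ω) →
    (C ∩ I x : Set Ω) ≤ᵐ[P] I y

theorem isLocal_indBase [SFinite P] (hS : Stable P S.1) : IsLocal P X (indBase P S) where
  measurableSet x _ := measurableSet_indBase S x
  le_of_eqOn x _ y _ C hC hxy := by
    obtain ⟨h_base, h_mem⟩ := (indBase_spec (x := x) hS).1
    refine (le_indBase_iff hS (hC.inter (measurableSet_indBase S x))).2
      ⟨inter_subset_right.eventuallyLE.trans h_base,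
        (h_mem.mono inter_subset_right.eventuallyLE).congr ?_⟩
    filter_upwards [hxy] with ω h hω using h hω.1

theorem IsLocal.compl (hI : IsLocal P X I) : IsLocal P X fun x => (I x)ᶜ where
  measurableSet x hx := (hI.measurableSet x hx).compl
  le_of_eqOn x hx y hy C hC hxy := by
    have h := hI.le_of_eqOn y hy x hx C hC (by filter_upwards [hxy] with ω h hω using (h hω).symm)
    filter_upwards [h] with ω h hω hω' using hω.2 (h ⟨hω.1, hω'⟩)

theorem IsLocal.inter (hI : IsLocal P X I) (hJ : IsLocal P X J) :
    IsLocal P X fun x => I x ∩ J x where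
  measurableSet x hx := (hI.measurableSet x hx).inter (hJ.measurableSet x hx)
  le_of_eqOn x hx y hy C hC hxy := by
    filter_upwards [hI.le_of_eqOn x hx y hy C hC hxy, hJ.le_of_eqOn x hx y hy C hC hxy]
      with ω h h' hω using ⟨h ⟨hω.1, hω.2.1⟩, h' ⟨hω.1, hω.2.2⟩⟩

theorem IsLocal.iUnion {I : ℕ → (Ω → E) → Set Ω} (hI : ∀ k, IsLocal P X (I k)) :
    IsLocal P X fun x => ⋃ k, I k x where
  measurableSet x hx := .iUnion fun k => (hI k).measurableSet x hx
  le_of_eqOn x hx y hy C hC hxy := by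
    rw [inter_iUnion]
    exact Filter.EventuallyLE.countable_iUnion fun k => (hI k).le_of_eqOn x hx y hy C hC hxy

theorem IsLocal.le_of_forall (hI : IsLocal P X I) {C : ℕ → Set Ω} {y : ℕ → Ω → E}
    (hC : ∀ k, MeasurableSet (C k)) (hD : D ≤ᵐ[P] (⋃ k, C k : Set Ω)) (hz : z ∈ X)
    (hy : ∀ k, y k ∈ X) (hyz : ∀ k, ∀ᵐ ω ∂P, ω ∈ C k → y k ω = z ω)
    (h : ∀ k, (C k ∩ D : Set Ω) ≤ᵐ[P] I (y k)) : D ≤ᵐ[P] I z := by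
  have hloc := ae_all_iff.2 fun k => hI.le_of_eqOn (y k) (hy k) z hz (C k) (hC k) (hyz k)
  filter_upwards [hD, hloc, ae_all_iff.2 h] with ω hD hloc h hω
  obtain ⟨k, hk⟩ := mem_iUnion.1 (hD hω)
  exact hloc k ⟨hk, h k ⟨hk, hω⟩⟩

/-- The conditional subset `V|A` of `X` determined by a local function `I`: the base `A` is the
largest set on which some `x ∈ X` satisfies `A ≤ I x`, and `V` is the set of all such `x`. -/
def ofLocal (P : Measure Ω) (X : Set (Ω → E)) (I : (Ω → E) → Set Ω) : CondRaw Ω E :=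
  ({x ∈ X | largestSet P (fun C => ∃ y ∈ X, C ≤ᵐ[P] I y) ≤ᵐ[P] I x},
    largestSet P fun C => ∃ y ∈ X, C ≤ᵐ[P] I y)

variable [SFinite P]

theorem IsLocal.ofLocal_base_spec (hX : Stable P X) (hI : IsLocal P X I) :
    (∃ x ∈ X, (ofLocal P X I).2 ≤ᵐ[P] I x) ∧
      ∀ C, MeasurableSet C → (∃ x ∈ X, C ≤ᵐ[P] I x) → C ≤ᵐ[P] (ofLocal P X I).2 := by
  obtain ⟨x, hx⟩ := hX.1
  refine largestSet_spec (Φ := fun C => ∃ y ∈ X, C ≤ᵐ[P] I y)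
    ⟨x, hx, (empty_subset (I x)).eventuallyLE⟩ fun C hC h => ?_
  choose y hy hCy using h
  obtain ⟨z, hz, hzy⟩ := hX.exists_glue hC hy
  refine ⟨z, hz, hI.le_of_forall (MeasurableSet.disjointed hC)
    iUnion_disjointed.ge.eventuallyLE hz hy (fun k => (hzy k).mono fun ω h hω => (h hω).symm)
    fun k => (inter_subset_left.trans (disjointed_subset C k)).eventuallyLE.trans (hCy k)⟩

theorem isCond_ofLocal (hX : Stable P X) (hI : IsLocal P X I) : IsCond P X (ofLocal P X I) := by
  refine ⟨⟨(hI.ofLocal_base_spec hX).1, fun x ⟨hx, hAx⟩ y hxy => ?_, fun B x hx => ?_⟩,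
    fun x hx => hx.1, measurableSet_largestSet _⟩
  · have hy := hX.2.1 x hx y hxy
    have h := hI.le_of_eqOn x hx y hy univ .univ (hxy.mono fun ω h _ => h)
    exact ⟨hy, by filter_upwards [hAx, h] with ω hAx h hω using h ⟨trivial, hAx hω⟩⟩
  · have h_concat := hX.2.2 B x fun k => (hx k).1
    refine ⟨h_concat, hI.le_of_forall B.meas ?_ h_concat (fun k => (hx k).1) (fun k => ?_)
      fun k => inter_subset_right.eventuallyLE.trans (hx k).2⟩
    · filter_upwards [B.ae_exists_mem_part] with ω hω _ using mem_iUnion.2 hω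
    · filter_upwards [B.concat_ae_eq x] with ω h hω using (h k hω).symm

theorem indBase_ofLocal_ae_eq (hX : Stable P X) (hI : IsLocal P X I) (hx : x ∈ X) :
    indBase P (ofLocal P X I) x =ᵐ[P] I x := by
  classical
  have hcond := isCond_ofLocal hX hI
  obtain ⟨h_base, y, ⟨hy, hAy⟩, hxy⟩ := (indBase_spec (x := x) hcond.1).1
  refine EventuallyLE.antisymm ?_ ?_
  · have h := hI.le_of_eqOn y hy x hx _ (measurableSet_indBase _ x)
      (hxy.mono fun ω h hω => (h hω).symm)
    filter_upwards [h, h_base, hAy] with ω h h_base hAy hω using h ⟨hω, hAy (h_base hω)⟩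
  · have hIx := hI.measurableSet x hx
    have hIA := (hI.ofLocal_base_spec hX).2 (I x) hIx ⟨x, hx, .rfl⟩
    have hu := hX.piecewise_mem hIx hx hy
    refine (le_indBase_iff hcond.1 hIx).2 ⟨hIA, (I x).piecewise x y, ⟨hu, ?_⟩,
      ae_of_all _ fun ω hω => (piecewise_eq_of_mem _ _ _ hω).symm⟩
    have h₁ := hI.le_of_eqOn x hx _ hu (I x) hIx
      (ae_of_all _ fun ω hω => (piecewise_eq_of_mem (I x) x y hω).symm)
    have h₂ := hI.le_of_eqOn y hy _ hu (I x)ᶜ hIx.compl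
      (ae_of_all _ fun ω hω => (piecewise_eq_of_notMem (I x) x y hω).symm)
    filter_upwards [h₁, h₂, hAy] with ω h₁ h₂ hAy hω
    exact (em (ω ∈ I x)).elim (fun h => h₁ ⟨h, h⟩) fun h => h₂ ⟨h, hAy hω⟩

end LocalFunctions

section LatticeOperations

variable {Ω E : Type*} {mΩ : MeasurableSpace Ω} {P : Measure Ω} {X : Set (Ω → E)}
  {x : Ω → E} {C : Set Ω} {s : Set (CondRaw Ω E)} {a b : CondRaw Ω E} {I : (Ω → E) → Set Ω}

theorem isCond_mk (hX : Stable P X) (hC : MeasurableSet C) : IsCond P X (X, C) :=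
  ⟨hX, Subset.rfl, hC⟩

theorem isSupOf_cSup (h : ∃ a, IsSupOf P X s a) : IsSupOf P X s (cSup P X s) := by
  rw [cSup, dif_pos h]
  exact h.choose_spec

theorem isInfOf_cInf (h : ∃ a, IsInfOf P X s a) : IsInfOf P X s (cInf P X s) := by
  rw [cInf, dif_pos h]
  exact h.choose_spec

variable [SFinite P]

theorem indBase_cSup_ae_eq (hX : Stable P X) (hs : ∀ b ∈ s, IsCond P X b)
    (hI : IsLocal P X I) (h_upper : ∀ b ∈ s, ∀ x ∈ X, indBase P b x ≤ᵐ[P] I x)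
    (h_least : ∀ c, IsCond P X c → (∀ b ∈ s, ∀ x ∈ X, indBase P b x ≤ᵐ[P] indBase P c x) →
      ∀ x ∈ X, I x ≤ᵐ[P] indBase P c x) :
    ∀ x ∈ X, indBase P (cSup P X s) x =ᵐ[P] I x := by
  have hcond := isCond_ofLocal hX hI
  have h_eq {x} (hx : x ∈ X) := indBase_ofLocal_ae_eq hX hI hx
  have h_sup : IsSupOf P X s (ofLocal P X I) :=
    ⟨hcond, fun b hb => (cle_iff (hs b hb) hcond).2 fun x hx =>
      (h_upper b hb x hx).trans (h_eq hx).symm.le,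
    fun c hc hle => (cle_iff hcond hc).2 fun x hx => (h_eq hx).le.trans <|
      h_least c hc (fun b hb => (cle_iff (hs b hb) hc).1 (hle b hb)) x hx⟩
  have h_cSup := isSupOf_cSup ⟨_, h_sup⟩
  have h_ceq : ceq P (cSup P X s) (ofLocal P X I) :=
    ⟨h_cSup.2.2 _ h_sup.1 h_sup.2.1, h_sup.2.2 _ h_cSup.1 h_cSup.2.1⟩
  exact fun x hx => ((ceq_iff h_cSup.1 hcond).1 h_ceq x hx).trans (h_eq hx)

theorem isCond_and_indBase_cInf_ae_eq (hX : Stable P X) (hs : ∀ b ∈ s, IsCond P X b)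
    (hI : IsLocal P X I) (h_lower : ∀ b ∈ s, ∀ x ∈ X, I x ≤ᵐ[P] indBase P b x)
    (h_greatest : ∀ c, IsCond P X c → (∀ b ∈ s, ∀ x ∈ X, indBase P c x ≤ᵐ[P] indBase P b x) →
      ∀ x ∈ X, indBase P c x ≤ᵐ[P] I x) :
    IsCond P X (cInf P X s) ∧ ∀ x ∈ X, indBase P (cInf P X s) x =ᵐ[P] I x := by
  have hcond := isCond_ofLocal hX hI
  have h_eq {x} (hx : x ∈ X) := indBase_ofLocal_ae_eq hX hI hx
  have h_inf : IsInfOf P X s (ofLocal P X I) :=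
    ⟨hcond, fun b hb => (cle_iff hcond (hs b hb)).2 fun x hx =>
      (h_eq hx).le.trans (h_lower b hb x hx),
    fun c hc hle => (cle_iff hc hcond).2 fun x hx => .trans
      (h_greatest c hc (fun b hb => (cle_iff hc (hs b hb)).1 (hle b hb)) x hx) (h_eq hx).symm.le⟩
  have h_cInf := isInfOf_cInf ⟨_, h_inf⟩
  have h_ceq : ceq P (cInf P X s) (ofLocal P X I) :=
    ⟨h_inf.2.2 _ h_cInf.1 h_cInf.2.1, h_cInf.2.2 _ h_inf.1 h_inf.2.1⟩
  exact ⟨h_cInf.1, fun x hx => ((ceq_iff h_cInf.1 hcond).1 h_ceq x hx).trans (h_eq hx)⟩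

theorem indBase_cSupFam_ae_eq (hX : Stable P X) {S : ℕ → CondRaw Ω E}
    (hS : ∀ k, IsCond P X (S k)) (hx : x ∈ X) :
    indBase P (cSupFam P X S) x =ᵐ[P] (⋃ k, indBase P (S k) x : Set Ω) := by
  refine indBase_cSup_ae_eq hX (forall_mem_range.2 hS)
    (.iUnion fun k => isLocal_indBase (hS k).1)
    (forall_mem_range.2 fun k x _ =>
      (subset_iUnion (fun j => indBase P (S j) x) k).eventuallyLE) ?_ x hx
  intro c _ hle x hx
  filter_upwards [ae_all_iff.2 fun k => hle (S k) ⟨k, rfl⟩ x hx] with ω h hω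
  obtain ⟨k, hk⟩ := mem_iUnion.1 hω
  exact h k hk

theorem isCond_and_indBase_cInf₂_ae_eq (hX : Stable P X) (ha : IsCond P X a)
    (hb : IsCond P X b) : IsCond P X (cInf₂ P X a b) ∧
      ∀ x ∈ X, indBase P (cInf₂ P X a b) x =ᵐ[P] (indBase P a x ∩ indBase P b x : Set Ω) := by
  refine isCond_and_indBase_cInf_ae_eq hX ?_ ((isLocal_indBase ha.1).inter (isLocal_indBase hb.1))
    ?_ fun c _ hle x hx => ?_
  · rintro _ (rfl | rfl)
    exacts [ha, hb]
  · rintro _ (rfl | rfl) x _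
    exacts [inter_subset_left.eventuallyLE, inter_subset_right.eventuallyLE]
  · filter_upwards [hle a (mem_insert a _) x hx, hle b (mem_insert_of_mem a rfl) x hx]
      with ω ha hb hω using ⟨ha hω, hb hω⟩

theorem cdisjoint_iff (hX : Stable P X) (ha : IsCond P X a) (hb : IsCond P X b) :
    cdisjoint P X a b ↔ ∀ x ∈ X, AEDisjoint P (indBase P a x) (indBase P b x) := by
  obtain ⟨h_cond, h_eq⟩ := isCond_and_indBase_cInf₂_ae_eq hX ha hb
  refine (ceq_iff h_cond (isCond_mk hX .empty)).trans (forall₂_congr fun x hx => ?_)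
  have h_bot := indBase_mk_ae_eq hX .empty hx
  exact ⟨fun h => ae_eq_empty.1 ((h_eq x hx).symm.trans (h.trans h_bot)),
    fun h => (h_eq x hx).trans ((ae_eq_empty.2 h).trans h_bot.symm)⟩

theorem indBase_ccompl_ae_eq (hX : Stable P X) (ha : IsCond P X a) (hx : x ∈ X) :
    indBase P (ccompl P X a) x =ᵐ[P] ((indBase P a x)ᶜ : Set Ω) := by
  have hI : IsLocal P X fun x => (indBase P a x)ᶜ := (isLocal_indBase ha.1).compl
  have h_cond := isCond_ofLocal hX hI
  refine indBase_cSup_ae_eq hX (fun b hb => hb.1) hI (fun b hb x hx => ?_)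
    (fun c _ hle x hx => ?_) x hx
  · filter_upwards [measure_eq_zero_iff_ae_notMem.1 ((cdisjoint_iff hX hb.1 ha).1 hb.2 x hx)]
      with ω h hωb hωa using h ⟨hωb, hωa⟩
  · refine (indBase_ofLocal_ae_eq hX hI hx).symm.le.trans
      (hle _ ⟨h_cond, (cdisjoint_iff hX h_cond ha).2 fun y hy => ?_⟩ x hx)
    exact (disjoint_compl_left.aedisjoint (μ := P)).congr (indBase_ofLocal_ae_eq hX hI hy) .rfl

end LatticeOperations

section GraphSigma

variable {Ω E : Type*} {mΩ : MeasurableSpace Ω} {P : Measure Ω} {X : Set (Ω → E)}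
  {𝒳 : Set (CondRaw Ω E)} {B : Set Ω} {S T : CondRaw Ω E} {G H : Set ((Ω → E) × Ω)}

/-- `G` is a graph of the conditional subset `S` of `X`: up to null sets, `(x, ω) ∈ G` means that
`x` belongs to `S` at `ω`. Nothing is required of the sections of `G` over points outside `X`. -/
def IsGraphOf (P : Measure Ω) (X : Set (Ω → E)) (S : CondRaw Ω E) (G : Set ((Ω → E) × Ω)) :
    Prop :=
  ∀ x ∈ X, Prod.mk x ⁻¹' G =ᵐ[P] indBase P S x

/-- The graph of a conditional subset `S` whose section over `x` is exactly `indBase P S x`. -/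
def graph (P : Measure Ω) (S : CondRaw Ω E) : Set ((Ω → E) × Ω) := {p | p.2 ∈ indBase P S p.1}

theorem isGraphOf_graph : IsGraphOf P X S (graph P S) := fun _ _ => .rfl

theorem IsStableSigma.isCond (hsig : IsStableSigma P X 𝒳) (hS : S ∈ 𝒳) : IsCond P X S :=
  hsig.1.2.1 S hS

theorem Partition.concat_const (A : Partition mΩ P) (x : Ω → E) : A.concat (fun _ => x) = x := by
  ext ω
  simp only [Partition.concat, dite_eq_ite, ite_self]

theorem concatSet_const (hX : Stable P X) (A : Partition mΩ P) :
    concatSet P A (fun _ => X) = X := by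
  ext f
  refine ⟨fun ⟨x, hx, hf⟩ => hX.2.1 _ (hX.2.2 A x hx) f hf.symm,
    fun hf => ⟨fun _ => f, fun _ => hf, ?_⟩⟩
  rw [A.concat_const]

variable [SFinite P]

theorem isGraphOf_mk (hX : Stable P X) (hB : MeasurableSet B) :
    IsGraphOf P X (X, B) (Prod.snd ⁻¹' B) := fun _ hx => (indBase_mk_ae_eq hX hB hx).symm

theorem isGraphOf_ctop (hX : Stable P X) : IsGraphOf P X (ctop X) univ := isGraphOf_mk hX .univ

theorem IsGraphOf.graph_inter (hTG : IsGraphOf P X T G) (hS : IsCond P X S) (hT : IsCond P X T)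
    (hST : cle P S T) : IsGraphOf P X S (graph P S ∩ G) := fun x hx => by
  have h_sub : indBase P S x ≤ᵐ[P] Prod.mk x ⁻¹' G :=
    ((cle_iff hS hT).1 hST x hx).trans (hTG x hx).symm.le
  refine inter_subset_left.eventuallyLE.antisymm ?_
  filter_upwards [h_sub] with ω h hω using ⟨hω, h hω⟩

theorem IsGraphOf.ceq (hS : IsCond P X S) (hT : IsCond P X T) (hSG : IsGraphOf P X S G)
    (hTG : IsGraphOf P X T G) : ceq P S T :=
  (ceq_iff hS hT).2 fun x hx => (hSG x hx).symm.trans (hTG x hx)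

theorem IsGraphOf.ccompl (hX : Stable P X) (hS : IsCond P X S) (hG : IsGraphOf P X S G) :
    IsGraphOf P X (ccompl P X S) Gᶜ := fun x hx =>
  (hG x hx).compl.trans (indBase_ccompl_ae_eq hX hS hx).symm

theorem IsGraphOf.cSupFam (hX : Stable P X) {S : ℕ → CondRaw Ω E} {G : ℕ → Set ((Ω → E) × Ω)}
    (hS : ∀ k, IsCond P X (S k)) (hG : ∀ k, IsGraphOf P X (S k) (G k)) :
    IsGraphOf P X (cSupFam P X S) (⋃ k, G k) := fun x hx => by
  rw [preimage_iUnion]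
  exact (Filter.EventuallyEq.countable_iUnion fun k => hG k x hx).trans
    (indBase_cSupFam_ae_eq hX hS hx).symm

theorem IsStableSigma.cbot_mem (hX : Stable P X) (hsig : IsStableSigma P X 𝒳) : cbot X ∈ 𝒳 := by
  refine hsig.1.2.2.1 _ (hsig.2.2.1 _ hsig.2.1) _ (isCond_mk hX .empty) ?_
  have h := (isGraphOf_ctop hX).ccompl hX (isCond_mk hX .univ)
  rw [compl_univ] at h
  exact h.ceq (hsig.isCond (hsig.2.2.1 _ hsig.2.1)) (isCond_mk hX .empty)
    (isGraphOf_mk hX .empty)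

theorem IsStableSigma.mk_mem (hX : Stable P X) (hsig : IsStableSigma P X 𝒳)
    (hB : MeasurableSet B) : (X, B) ∈ 𝒳 := by
  let A := disjointedPartition P (fun n => if n = 0 then B else Bᶜ)
    (fun n => by split_ifs; exacts [hB, hB.compl]) (iUnion_ite_compl_eq_univ B)
  have h_mem := hsig.1.2.2.2 A (fun n => (X, if n = 0 then univ else ∅)) fun n => by
    split_ifs
    exacts [hsig.2.1, hsig.cbot_mem hX]
  have h_part : A.part 0 = B := by simp only [A, disjointedPartition, disjointed_zero, if_true]
  have h_base : ⋃ k, A.part k ∩ (if k = 0 then univ else ∅) = B := by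
    ext ω
    simp [h_part]
  simpa only [condConcat, concatSet_const hX, h_base] using h_mem

/-- The σ-algebra on pairs `(x, ω)` consisting of the graphs of the members of a stable
σ-algebra. -/
@[reducible]
def graphSigma (hX : Stable P X) (hsig : IsStableSigma P X 𝒳) :
    MeasurableSpace ((Ω → E) × Ω) where
  MeasurableSet' G := ∃ S ∈ 𝒳, IsGraphOf P X S G
  measurableSet_empty := ⟨cbot X, hsig.cbot_mem hX, isGraphOf_mk hX .empty⟩
  measurableSet_compl := fun _ ⟨S, hS, hG⟩ =>
    ⟨ccompl P X S, hsig.2.2.1 S hS, hG.ccompl hX (hsig.isCond hS)⟩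
  measurableSet_iUnion := fun G hG => by
    choose S hS hG using hG
    exact ⟨cSupFam P X S, hsig.2.2.2 S hS, .cSupFam hX (fun k => hsig.isCond (hS k)) hG⟩

end GraphSigma

section ScalarMeasure

variable {Ω E : Type*} {mΩ : MeasurableSpace Ω} {P κ : Measure Ω} {X : Set (Ω → E)}
  {𝒳 : Set (CondRaw Ω E)} {μ ν : CondRaw Ω E → Ω → ℝ≥0∞} {B : Set Ω}
  {S T U : CondRaw Ω E} {G H : Set ((Ω → E) × Ω)}

variable [SFinite P]

theorem IsStableMeasureOn.ae_eq_of_isGraphOf (hsig : IsStableSigma P X 𝒳)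
    (hμ : IsStableMeasureOn P X 𝒳 μ) (hS : S ∈ 𝒳) (hT : T ∈ 𝒳) (hSG : IsGraphOf P X S G)
    (hTG : IsGraphOf P X T G) : μ S =ᵐ[P] μ T :=
  hμ.1.2.1 S hS T hT (hSG.ceq (hsig.isCond hS) (hsig.isCond hT) hTG)

theorem IsStableMeasureOn.ae_eq_zero_of_isGraphOf (hX : Stable P X) (hsig : IsStableSigma P X 𝒳)
    (hμ : IsStableMeasureOn P X 𝒳 μ) (hS : S ∈ 𝒳) (hSG : IsGraphOf P X S G)
    (hB : MeasurableSet B) (hGB : G ⊆ Prod.snd ⁻¹' B) : ∀ᵐ ω ∂P, ω ∉ B → μ S ω = 0 := by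
  have h_le : cle P S (X, B) := (cle_iff (hsig.isCond hS) (isCond_mk hX hB)).2 fun x hx =>
    (hSG x hx).symm.le.trans <|
      (preimage_mono (f := Prod.mk x) hGB).eventuallyLE.trans (isGraphOf_mk hX hB x hx).le
  filter_upwards [ae_le_set.2 h_le.1, hμ.2.1 S hS] with ω h_base h_M1 hω
  rw [h_M1, indicator_of_notMem fun h => hω (h_base h)]

theorem IsStableMeasureOn.ae_eq_tsum (hX : Stable P X) (hsig : IsStableSigma P X 𝒳)
    (hμ : IsStableMeasureOn P X 𝒳 μ) {S : ℕ → CondRaw Ω E} {G : ℕ → Set ((Ω → E) × Ω)}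
    (hS : ∀ k, S k ∈ 𝒳) (hT : T ∈ 𝒳) (hSG : ∀ k, IsGraphOf P X (S k) (G k))
    (hTG : IsGraphOf P X T (⋃ k, G k)) (hG : Pairwise (Function.onFun Disjoint G)) :
    μ T =ᵐ[P] fun ω => ∑' k, μ (S k) ω := by
  have hS' (k : ℕ) := hsig.isCond (hS k)
  have h_sup := hsig.2.2.2 S hS
  refine (hμ.ae_eq_of_isGraphOf hsig hT h_sup hTG (.cSupFam hX hS' hSG)).trans
    (hμ.2.2 S hS (fun i j hij => (cdisjoint_iff hX (hS' i) (hS' j)).2 fun x hx => ?_) h_sup)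
  exact ((hG hij).preimage _).aedisjoint.congr (hSG i x hx).symm (hSG j x hx).symm

/-- The measure `G ↦ ∫ μ(S) dκ`, where `G` is the graph of `S`, obtained from a stable measure `μ`
by integrating its values against a measure `κ ≪ P`. -/
def scalarMeasure (hX : Stable P X) (hsig : IsStableSigma P X 𝒳)
    (hμ : IsStableMeasureOn P X 𝒳 μ) (hκ : κ ≪ P) : Measure[graphSigma hX hsig] ((Ω → E) × Ω) :=
  @Measure.ofMeasurable _ (graphSigma hX hsig) (fun _ hG => ∫⁻ ω, μ hG.choose ω ∂κ)
    (by
      obtain ⟨hS, hSG⟩ := (@MeasurableSet.empty _ (graphSigma hX hsig)).choose_spec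
      have h := hμ.ae_eq_zero_of_isGraphOf hX hsig hS hSG .empty (empty_subset _)
      exact (lintegral_congr_ae (hκ.ae_le (h.mono fun ω h => h (notMem_empty ω)))).trans
        lintegral_zero)
    (fun G hG h_disj => by
      have hS (k : ℕ) := (hG k).choose_spec
      obtain ⟨hT, hTG⟩ := (@MeasurableSet.iUnion _ _ (graphSigma hX hsig) _ _ hG).choose_spec
      rw [← lintegral_tsum fun k => (hμ.1.1 _ (hS k).1).aemeasurable]
      exact lintegral_congr_ae <| hκ.ae_le <|
        hμ.ae_eq_tsum hX hsig (fun k => (hS k).1) hT (fun k => (hS k).2) hTG h_disj)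

theorem scalarMeasure_apply (hX : Stable P X) (hsig : IsStableSigma P X 𝒳)
    (hμ : IsStableMeasureOn P X 𝒳 μ) (hκ : κ ≪ P) (hS : S ∈ 𝒳) (hSG : IsGraphOf P X S G) :
    scalarMeasure hX hsig hμ hκ G = ∫⁻ ω, μ S ω ∂κ := by
  have hG : MeasurableSet[graphSigma hX hsig] G := ⟨S, hS, hSG⟩
  refine (@Measure.ofMeasurable_apply _ (graphSigma hX hsig) _ _ _ G hG).trans ?_
  exact lintegral_congr_ae <| hκ.ae_le <|
    hμ.ae_eq_of_isGraphOf hsig hG.choose_spec.1 hS hG.choose_spec.2 hSG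

theorem IsStableMeasureOn.ae_eq_add (hX : Stable P X) (hsig : IsStableSigma P X 𝒳)
    (hμ : IsStableMeasureOn P X 𝒳 μ) (hS : S ∈ 𝒳) (hT : T ∈ 𝒳) (hU : U ∈ 𝒳)
    (hSG : IsGraphOf P X S G) (hTH : IsGraphOf P X T H) (hUGH : IsGraphOf P X U (G ∪ H))
    (hGH : Disjoint G H) : μ U =ᵐ[P] μ S + μ T := by
  rw [EventuallyEq, ← ae_toFinite]
  refine ae_eq_of_forall_setLIntegral_eq_of_sigmaFinite (hμ.1.1 U hU)
    ((hμ.1.1 S hS).add (hμ.1.1 T hT)) fun B _ _ => ?_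
  have hκ : P.toFinite.restrict B ≪ P :=
    Measure.restrict_le_self.absolutelyContinuous.trans (toFinite_absolutelyContinuous P)
  simp only [Pi.add_apply]
  rw [lintegral_add_left (hμ.1.1 S hS), ← scalarMeasure_apply hX hsig hμ hκ hU hUGH,
    ← scalarMeasure_apply hX hsig hμ hκ hS hSG, ← scalarMeasure_apply hX hsig hμ hκ hT hTH]
  exact measure_union hGH ⟨T, hT, hTH⟩

theorem IsStableMeasureOn.ae_ctop_eq_add_ccompl (hX : Stable P X) (hsig : IsStableSigma P X 𝒳)
    (hμ : IsStableMeasureOn P X 𝒳 μ) (hS : S ∈ 𝒳) :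
    μ (ctop X) =ᵐ[P] μ S + μ (ccompl P X S) := by
  refine hμ.ae_eq_add hX hsig hS (hsig.2.2.1 S hS) hsig.2.1 isGraphOf_graph
    (isGraphOf_graph.ccompl hX (hsig.isCond hS)) ?_ disjoint_compl_right
  rw [union_compl_self]
  exact isGraphOf_ctop hX

theorem IsFiniteStableMeasureOn.ae_ne_top (hX : Stable P X) (hsig : IsStableSigma P X 𝒳)
    (hμ : IsFiniteStableMeasureOn P X 𝒳 μ) (hS : S ∈ 𝒳) : ∀ᵐ ω ∂P, μ S ω ≠ ∞ := by
  filter_upwards [hμ.2, hμ.1.ae_ctop_eq_add_ccompl hX hsig hS] with ω h_fin h_add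
  rw [h_add] at h_fin
  exact (ENNReal.add_lt_top.1 h_fin).1.ne

theorem IsStableMeasureOn.ae_eq_indicator (hX : Stable P X) (hsig : IsStableSigma P X 𝒳)
    (hμ : IsStableMeasureOn P X 𝒳 μ) (hS : S ∈ 𝒳) (hT : T ∈ 𝒳) (hB : MeasurableSet B)
    (hSG : IsGraphOf P X S G) (hTG : IsGraphOf P X T (G ∩ Prod.snd ⁻¹' B)) :
    μ T =ᵐ[P] B.indicator (μ S) := by
  obtain ⟨U, hU, hUG⟩ : MeasurableSet[graphSigma hX hsig] (G ∩ (Prod.snd ⁻¹' B)ᶜ) :=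
    MeasurableSet.inter (m := graphSigma hX hsig) ⟨S, hS, hSG⟩
      ⟨(X, Bᶜ), hsig.mk_mem hX hB.compl, isGraphOf_mk hX hB.compl⟩
  have h_add : μ S =ᵐ[P] μ T + μ U := hμ.ae_eq_add hX hsig hT hU hS hTG hUG
    (by rwa [inter_union_compl]) (disjoint_compl_right.mono inter_subset_right inter_subset_right)
  have hT₀ := hμ.ae_eq_zero_of_isGraphOf hX hsig hT hTG hB inter_subset_right
  have hU₀ := hμ.ae_eq_zero_of_isGraphOf hX hsig hU hUG hB.compl inter_subset_right
  filter_upwards [h_add, hT₀, hU₀] with ω h_add hT₀ hU₀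
  by_cases hω : ω ∈ B
  · rw [indicator_of_mem hω, h_add, Pi.add_apply, hU₀ (not_not.2 hω), add_zero]
  · rw [indicator_of_notMem hω, hT₀ hω]

theorem IsStableMeasureOn.ae_le_of_scalarMeasure_le (hX : Stable P X)
    (hsig : IsStableSigma P X 𝒳) (hμ : IsStableMeasureOn P X 𝒳 μ)
    (hν : IsStableMeasureOn P X 𝒳 ν) [SigmaFinite κ] (hκ : κ ≪ P) (hPκ : P ≪ κ) (hS : S ∈ 𝒳)
    (hSG : IsGraphOf P X S G)
    (h : ∀ t, MeasurableSet[graphSigma hX hsig] t → t ⊆ G →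
      scalarMeasure hX hsig hμ hκ t ≤ scalarMeasure hX hsig hν hκ t) :
    μ S ≤ᵐ[P] ν S := by
  refine hPκ.ae_le (ae_le_of_forall_setLIntegral_le_of_sigmaFinite (hμ.1.1 S hS) fun B hB _ => ?_)
  obtain ⟨T, hT, hTG⟩ : MeasurableSet[graphSigma hX hsig] (G ∩ Prod.snd ⁻¹' B) :=
    MeasurableSet.inter (m := graphSigma hX hsig) ⟨S, hS, hSG⟩
      ⟨(X, B), hsig.mk_mem hX hB, isGraphOf_mk hX hB⟩
  have h_apply {ρ : CondRaw Ω E → Ω → ℝ≥0∞} (hρ : IsStableMeasureOn P X 𝒳 ρ) :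
      scalarMeasure hX hsig hρ hκ (G ∩ Prod.snd ⁻¹' B) = ∫⁻ ω in B, ρ S ω ∂κ := by
    rw [scalarMeasure_apply hX hsig hρ hκ hT hTG, ← lintegral_indicator hB]
    exact lintegral_congr_ae (hκ.ae_le (hρ.ae_eq_indicator hX hsig hS hT hB hSG hTG))
  simpa only [h_apply] using h _ ⟨T, hT, hTG⟩ inter_subset_left

end ScalarMeasure

section Hahn

theorem exists_equivalent_finite_measure_lintegral_ne_top {α : Type*} {mα : MeasurableSpace α}
    {P : Measure α} [SFinite P] {f : α → ℝ≥0∞} (hf : Measurable f) (hf_top : ∀ᵐ a ∂P, f a < ∞) :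
    ∃ κ : Measure α, IsFiniteMeasure κ ∧ κ ≪ P ∧ P ≪ κ ∧ ∫⁻ a, f a ∂κ ≠ ∞ := by
  let g : α → ℝ≥0∞ := fun a => (1 + f a)⁻¹
  have hg : Measurable g := (measurable_const.add hf).inv
  have hg_le (a : α) : g a ≤ 1 := ENNReal.inv_le_one.2 le_self_add
  have hgf_le (a : α) : g a * f a ≤ 1 := by
    rw [mul_comm, ← div_eq_mul_inv]
    exact ENNReal.div_le_of_le_mul (by rw [one_mul]; exact le_add_self)
  have h_one : ∫⁻ _, 1 ∂P.toFinite ≠ ∞ := by simp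
  have hg_int : ∫⁻ a, g a ∂P.toFinite ≠ ∞ := ne_top_of_le_ne_top h_one (lintegral_mono hg_le)
  refine ⟨P.toFinite.withDensity g, isFiniteMeasure_withDensity hg_int,
    (withDensity_absolutelyContinuous _ _).trans (toFinite_absolutelyContinuous P),
    (absolutelyContinuous_toFinite P).trans
      (withDensity_absolutelyContinuous' hg.aemeasurable ?_), ?_⟩
  · rw [ae_toFinite]
    filter_upwards [hf_top] with a ha
    exact ENNReal.inv_ne_zero.2 (ENNReal.add_ne_top.2 ⟨ENNReal.one_ne_top, ha.ne⟩)
  · rw [lintegral_withDensity_eq_lintegral_mul _ hg hf]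
    exact ne_top_of_le_ne_top h_one (lintegral_mono hgf_le)

variable {Ω E : Type*} {mΩ : MeasurableSpace Ω} {P : Measure Ω} [SFinite P] {X : Set (Ω → E)}
  {𝒳 : Set (CondRaw Ω E)} {μ ν μ₁ μ₂ : CondRaw Ω E → Ω → ℝ≥0∞}

theorem IsFiniteStableMeasureOn.exists_hahn_decomposition (hX : Stable P X)
    (hsig : IsStableSigma P X 𝒳) (hμ : IsFiniteStableMeasureOn P X 𝒳 μ)
    (hν : IsFiniteStableMeasureOn P X 𝒳 ν) :
    ∃ S₀ ∈ 𝒳, (∀ S ∈ 𝒳, cle P S S₀ → μ S ≤ᵐ[P] ν S) ∧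
      ∀ S ∈ 𝒳, cle P S (ccompl P X S₀) → ν S ≤ᵐ[P] μ S := by
  have h_top := hsig.2.1
  obtain ⟨κ, _, hκ, hPκ, h_int⟩ := exists_equivalent_finite_measure_lintegral_ne_top (P := P)
    ((hμ.1.1.1 _ h_top).add (hν.1.1.1 _ h_top))
    (by filter_upwards [hμ.2, hν.2] with ω h h' using ENNReal.add_lt_top.2 ⟨h, h'⟩)
  have h_finite {ρ : CondRaw Ω E → Ω → ℝ≥0∞} (hρ : IsStableMeasureOn P X 𝒳 ρ)
      (h_le : ∀ ω, ρ (ctop X) ω ≤ (μ (ctop X) + ν (ctop X)) ω) :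
      IsFiniteMeasure (scalarMeasure hX hsig hρ hκ) := by
    refine ⟨?_⟩
    rw [scalarMeasure_apply hX hsig hρ hκ h_top (isGraphOf_ctop hX)]
    exact (lintegral_mono h_le).trans_lt h_int.lt_top
  have := h_finite hμ.1 fun ω => le_self_add
  have := h_finite hν.1 fun ω => le_add_self
  obtain ⟨G, ⟨S₀, hS₀, hG⟩, h_pos, h_neg⟩ :=
    hahn_decomposition (scalarMeasure hX hsig hν.1 hκ) (scalarMeasure hX hsig hμ.1 hκ)
  refine ⟨S₀, hS₀, fun S hS hle => ?_, fun S hS hle => ?_⟩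
  · exact hμ.1.ae_le_of_scalarMeasure_le hX hsig hν.1 hκ hPκ hS
      (hG.graph_inter (hsig.isCond hS) (hsig.isCond hS₀) hle)
      fun t ht htG => h_pos t ht (htG.trans inter_subset_right)
  · exact hν.1.ae_le_of_scalarMeasure_le hX hsig hμ.1 hκ hPκ hS
      ((hG.ccompl hX (hsig.isCond hS₀)).graph_inter (hsig.isCond hS)
        (hsig.isCond (hsig.2.2.1 S₀ hS₀)) hle)
      fun t ht htG => h_neg t ht (htG.trans inter_subset_right)

theorem stable_hahn_lemma_general (hX : Stable P X) (hsig : IsStableSigma P X 𝒳)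
    (hμ₁ : IsFiniteStableMeasureOn P X 𝒳 μ₁) (hμ₂ : IsFiniteStableMeasureOn P X 𝒳 μ₂) :
    ∃ S₀ ∈ 𝒳,
      (∀ᵐ ω ∂P,
        (μ₂ (ctop X) ω).toReal - (μ₁ (ctop X) ω).toReal ≤
          (μ₂ S₀ ω).toReal - (μ₁ S₀ ω).toReal) ∧
      ∀ S ∈ 𝒳, cle P S S₀ →
        ∀ᵐ ω ∂P, 0 ≤ (μ₂ S ω).toReal - (μ₁ S ω).toReal := by
  obtain ⟨S₀, hS₀, h_pos, h_neg⟩ := hμ₁.exists_hahn_decomposition hX hsig hμ₂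
  have hS₀' := hsig.2.2.1 S₀ hS₀
  have h_refl : cle P (ccompl P X S₀) (ccompl P X S₀) :=
    (cle_iff (hsig.isCond hS₀') (hsig.isCond hS₀')).2 fun _ _ => .rfl
  have h_add {ρ : CondRaw Ω E → Ω → ℝ≥0∞} (hρ : IsFiniteStableMeasureOn P X 𝒳 ρ) :
      ∀ᵐ ω ∂P, (ρ (ctop X) ω).toReal = (ρ S₀ ω).toReal + (ρ (ccompl P X S₀) ω).toReal := by
    filter_upwards [hρ.1.ae_ctop_eq_add_ccompl hX hsig hS₀, hρ.ae_ne_top hX hsig hS₀,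
      hρ.ae_ne_top hX hsig hS₀'] with ω h h₀ h₁
    rw [h, Pi.add_apply, ENNReal.toReal_add h₀ h₁]
  refine ⟨S₀, hS₀, ?_, fun S hS hle => ?_⟩
  · filter_upwards [h_add hμ₁, h_add hμ₂, h_neg _ hS₀' h_refl,
      hμ₁.ae_ne_top hX hsig hS₀'] with ω h₁ h₂ h_le h_fin
    linarith [ENNReal.toReal_mono h_fin h_le]
  · filter_upwards [h_pos S hS hle, hμ₂.ae_ne_top hX hsig hS] with ω h_le h_fin
    exact sub_nonneg.2 (ENNReal.toReal_mono h_fin h_le)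

end Hahn

/-- **Lemma 5.5 (a conditional Hahn-type lemma).**  Let `μ₁, μ₂` be finite stable
measures on a stable measurable space `(X, 𝒳)` and `μ₃ := μ₂ − μ₁` (an `L⁰`-valued
stable set function).  Then there exists `X₀|A₀ ∈ 𝒳` such that
(i) `μ₃(X) ≤ μ₃(X₀|A₀)` and (ii) `0 ≤ μ₃(V|A)` for every `V|A ∈ 𝒳` with
`V|A ⊑ X₀|A₀`. -/
theorem stable_hahn_lemma
    {Ω E : Type*} {mΩ : MeasurableSpace Ω} (P : @Measure Ω mΩ)
    [IsProbabilityMeasure P] (X : Set (Ω → E)) (hX : Stable P X)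
    (𝒳 : Set (CondRaw Ω E)) (hsig : IsStableSigma P X 𝒳)
    (μ₁ μ₂ : CondRaw Ω E → Ω → ℝ≥0∞)
    (hμ₁ : IsFiniteStableMeasureOn P X 𝒳 μ₁)
    (hμ₂ : IsFiniteStableMeasureOn P X 𝒳 μ₂) :
    ∃ S₀ ∈ 𝒳,
      (∀ᵐ ω ∂P,
        (μ₂ (ctop X) ω).toReal - (μ₁ (ctop X) ω).toReal ≤
          (μ₂ S₀ ω).toReal - (μ₁ S₀ ω).toReal) ∧
      ∀ S ∈ 𝒳, cle P S S₀ →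
        ∀ᵐ ω ∂P, 0 ≤ (μ₂ S ω).toReal - (μ₁ S ω).toReal :=
  stable_hahn_lemma_general hX hsig hμ₁ hμ₂

end CondMT
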